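/- Let C = (c_{xy}) ∈ Cor(2,2) with rank(C) = 2, and set θ_{xy} = arccos(c_{xy}) ∈ [0,π] for x, y ∈ {1,2}. Then C is an extreme point of Cor(2,2) if and only if C saturates exactly one of the eight cycle inequalities 0 ≤ (Σ_{(x,y) ≠ (x',y')} θ_{xy}) − θ_{x'y'} ≤ 2π (one pair of inequalities for each choice of (x',y') ∈ {1,2}×{1,2}), and saturates at most one of the eight box inequalities 0 ≤ θ_{xy} ≤ π. -/

import Mathlib

open Matrix Real
open scoped RealInnerProductSpace

/-- The set of quantum correlation matrices (Tsirelson): `n × m` real matrices whose entries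
are inner products of unit vectors in `ℝ^{n+m}`. -/
def Cor (n m : ℕ) : Set (Matrix (Fin n) (Fin m) ℝ) :=
  {C | ∃ u : Fin n → EuclideanSpace ℝ (Fin (n + m)),
       ∃ v : Fin m → EuclideanSpace ℝ (Fin (n + m)),
       (∀ x, ‖u x‖ = 1) ∧ (∀ y, ‖v y‖ = 1) ∧
       ∀ x y, C x y = ⟪u x, v y⟫}

/-- The elliptope: PSD matrices with unit diagonal. -/
def Elliptope (k : ℕ) : Set (Matrix (Fin k) (Fin k) ℝ) :=
  {X | X.PosSemidef ∧ ∀ i, X i i = 1}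

/-- `X` is a PSD completion of `C`. -/
def IsPSDCompletion (n m : ℕ) (X : Matrix (Fin (n + m)) (Fin (n + m)) ℝ)
    (C : Matrix (Fin n) (Fin m) ℝ) : Prop :=
  X ∈ Elliptope (n + m) ∧ ∀ x y, X (Fin.castAdd m x) (Fin.natAdd n y) = C x y

/-- `C` is an extreme point of the convex set `S`. -/
def IsExtremePt {E : Type*} [AddCommMonoid E] [Module ℝ E] (S : Set E) (C : E) : Prop :=
  C ∈ S ∧ ∀ C₁ ∈ S, ∀ C₂ ∈ S, ∀ l : ℝ, 0 < l → l < 1 →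
    C = l • C₁ + (1 - l) • C₂ → C₁ = C ∧ C₂ = C

section InnerProduct

variable {E : Type*} [NormedAddCommGroup E] [InnerProductSpace ℝ E]

/-- Nonnegativity of the Gram determinant of three unit vectors. -/
lemma gram_three_le {a b v : E} (ha : ‖a‖ = 1) (hb : ‖b‖ = 1) (hv : ‖v‖ = 1) :
    (⟪a, b⟫ - ⟪a, v⟫ * ⟪b, v⟫) ^ 2 ≤ (1 - ⟪a, v⟫ ^ 2) * (1 - ⟪b, v⟫ ^ 2) := by
  have h := real_inner_mul_inner_self_le (a - ⟪a, v⟫ • v) (b - ⟪b, v⟫ • v)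
  have ha' : ⟪a, a⟫ = 1 := by simp [ha]
  have hb' : ⟪b, b⟫ = 1 := by simp [hb]
  have hv' : ⟪v, v⟫ = 1 := by simp [hv]
  simp only [inner_sub_left, inner_sub_right, real_inner_smul_left, real_inner_smul_right,
    ha', hb', hv', real_inner_comm a v, real_inner_comm b v] at h
  linarith

lemma inner_sq_le_one {a v : E} (ha : ‖a‖ = 1) (hv : ‖v‖ = 1) : ⟪a, v⟫ ^ 2 ≤ 1 := by
  have h := abs_real_inner_le_norm a v
  rw [ha, hv, one_mul] at h
  rwa [sq_le_one_iff_abs_le_one]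

/-- Two vectors at angles `α` and `β` on both sides of `v`, at angle `α + β` of each other,
are coplanar with `v`. -/
lemma sin_smul_add_sin_smul {a b v : E} (ha : ‖a‖ = 1) (hb : ‖b‖ = 1) (hv : ‖v‖ = 1) {α β : ℝ}
    (hav : ⟪a, v⟫ = cos α) (hbv : ⟪b, v⟫ = cos β) (hab : ⟪a, b⟫ = cos (α + β)) :
    sin β • a + sin α • b - sin (α + β) • v = 0 := by
  have ha' : ⟪a, a⟫ = 1 := by simp [ha]
  have hb' : ⟪b, b⟫ = 1 := by simp [hb]
  have hv' : ⟪v, v⟫ = 1 := by simp [hv]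
  rw [← inner_self_eq_zero (𝕜 := ℝ)]
  simp only [inner_sub_left, inner_sub_right, inner_add_left, inner_add_right,
    real_inner_smul_left, real_inner_smul_right, ha', hb', hv', real_inner_comm a v,
    real_inner_comm b v, real_inner_comm a b, hav, hbv, hab, sin_add, cos_add]
  have h1 : cos α ^ 2 = 1 - sin α ^ 2 := cos_sq' α
  have h2 : cos β ^ 2 = 1 - sin β ^ 2 := cos_sq' β
  ring_nf
  simp only [h1, h2]
  ring

/-- The coplanarity relation determines the inner product of the outer vectors. -/
lemma inner_eq_cos_add {a b v : E} (ha : ‖a‖ = 1) (hb : ‖b‖ = 1) (hv : ‖v‖ = 1) {α β : ℝ}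
    (h : sin β • a + sin α • b - sin (α + β) • v = 0) (hα : sin α ≠ 0) (hβ : sin β ≠ 0) :
    ⟪a, b⟫ = cos (α + β) := by
  have ha' : ⟪a, a⟫ = 1 := by simp [ha]
  have hb' : ⟪b, b⟫ = 1 := by simp [hb]
  have hv' : ⟪v, v⟫ = 1 := by simp [hv]
  have h' : ⟪sin β • a + sin α • b, sin β • a + sin α • b⟫
      = ⟪sin (α + β) • v, sin (α + β) • v⟫ := by rw [sub_eq_zero.mp h]
  simp only [inner_add_left, inner_add_right, real_inner_smul_left, real_inner_smul_right,
    ha', hb', hv', real_inner_comm a b] at h'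
  refine mul_left_cancel₀ (mul_ne_zero (mul_ne_zero two_ne_zero hα) hβ) ?_
  have h1 : cos α ^ 2 = 1 - sin α ^ 2 := cos_sq' α
  have h2 : cos β ^ 2 = 1 - sin β ^ 2 := cos_sq' β
  have key : sin (α + β) ^ 2
      = sin α ^ 2 + sin β ^ 2 + 2 * sin α * sin β * cos (α + β) := by
    rw [sin_add, cos_add]
    ring_nf
    simp only [h1, h2]
    ring
  linarith

/-- The coplanarity relation and the angle of the outer vectors determine the other angles. -/
lemma inner_eq_cos {a b v : E} (ha : ‖a‖ = 1) (hb : ‖b‖ = 1) {α β : ℝ}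
    (h : sin β • a + sin α • b - sin (α + β) • v = 0) (hab : ⟪a, b⟫ = cos (α + β))
    (hs : sin (α + β) ≠ 0) : ⟪a, v⟫ = cos α ∧ ⟪b, v⟫ = cos β := by
  have ha' : ⟪a, a⟫ = 1 := by simp [ha]
  have hb' : ⟪b, b⟫ = 1 := by simp [hb]
  have h1 : cos α ^ 2 = 1 - sin α ^ 2 := cos_sq' α
  have h2 : cos β ^ 2 = 1 - sin β ^ 2 := cos_sq' β
  have hA : ⟪a, sin β • a + sin α • b⟫ = ⟪a, sin (α + β) • v⟫ := by rw [sub_eq_zero.mp h]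
  have hB : ⟪b, sin β • a + sin α • b⟫ = ⟪b, sin (α + β) • v⟫ := by rw [sub_eq_zero.mp h]
  simp only [inner_add_right, real_inner_smul_right, ha', hb', real_inner_comm a b, hab] at hA hB
  constructor
  · refine mul_left_cancel₀ hs ?_
    rw [← hA, sin_add, cos_add]
    ring_nf
    simp only [h1]
    ring
  · refine mul_left_cancel₀ hs ?_
    rw [← hB, sin_add, cos_add]
    ring_nf
    simp only [h2]
    ring

/-- Bounds on the third side of a spherical triangle. -/
lemma cos_add_le_inner_le_cos_sub {a b v : E} (ha : ‖a‖ = 1) (hb : ‖b‖ = 1) (hv : ‖v‖ = 1)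
    {α β : ℝ} (hα : 0 ≤ sin α) (hβ : 0 ≤ sin β) (hav : ⟪a, v⟫ = cos α) (hbv : ⟪b, v⟫ = cos β) :
    cos (α + β) ≤ ⟪a, b⟫ ∧ ⟪a, b⟫ ≤ cos (α - β) := by
  have h := gram_three_le ha hb hv
  rw [hav, hbv, ← sin_sq, ← sin_sq, ← mul_pow] at h
  have := abs_le_of_sq_le_sq' h (mul_nonneg hα hβ)
  rw [cos_add, cos_sub]
  constructor <;> linarith [this.1, this.2]

end InnerProduct

/-- Two unit vectors with inner product `s = ±1` have inner products with a third one that agree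
up to the sign `s`. -/
lemma eq_mul_of_gram_le {s c d : ℝ} (hs : s ^ 2 = 1)
    (h : (s - c * d) ^ 2 ≤ (1 - c ^ 2) * (1 - d ^ 2)) : c = s * d := by
  have : (c - s * d) ^ 2 ≤ 0 := by nlinarith
  have := pow_eq_zero_iff two_ne_zero |>.mp (le_antisymm this (sq_nonneg _))
  linarith

/-- Coordinates of a unit vector with inner products `c` and `d` with two unit vectors of inner
product `s`. -/
lemma exists_unit_vector {s c d : ℝ} (hs : s ^ 2 ≤ 1) (hc : c ^ 2 ≤ 1)
    (h : (s - c * d) ^ 2 ≤ (1 - c ^ 2) * (1 - d ^ 2)) :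
    ∃ x y z : ℝ, x ^ 2 + y ^ 2 + z ^ 2 = 1 ∧ x = c ∧ s * x + √(1 - s ^ 2) * y = d := by
  have hr : √(1 - s ^ 2) ^ 2 = 1 - s ^ 2 := Real.sq_sqrt (by linarith)
  set r := √(1 - s ^ 2) with hrdef
  obtain hr0 | hr0 := eq_or_ne r 0
  · rw [hr0] at hr
    refine ⟨c, √(1 - c ^ 2), 0, ?_, rfl, ?_⟩
    · rw [Real.sq_sqrt (by linarith)]; ring
    · have hs1 : s ^ 2 = 1 := by linarith
      have := eq_mul_of_gram_le (c := d) (d := c) hs1 (by linarith [h, mul_comm c d])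
      rw [hr0, this]; ring
  · have hy : c ^ 2 + ((d - s * c) / r) ^ 2 ≤ 1 := by
      have : ((d - s * c) / r) ^ 2 ≤ 1 - c ^ 2 := by
        rw [div_pow, hr, div_le_iff₀ (by rw [← hr]; positivity)]
        nlinarith
      linarith
    refine ⟨c, (d - s * c) / r, √(1 - c ^ 2 - ((d - s * c) / r) ^ 2), ?_, rfl, ?_⟩
    · rw [Real.sq_sqrt (by linarith)]; ring
    · field_simp; ring

/-- A `2 × 2` matrix is a correlation matrix if an inner product `s` of the row vectors is
compatible with each column. -/
lemma mem_Cor_of_gram_le {C : Matrix (Fin 2) (Fin 2) ℝ} {s : ℝ} (hs : s ^ 2 ≤ 1)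
    (hC : ∀ y, C 0 y ^ 2 ≤ 1)
    (h : ∀ y, (s - C 0 y * C 1 y) ^ 2 ≤ (1 - C 0 y ^ 2) * (1 - C 1 y ^ 2)) : C ∈ Cor 2 2 := by
  choose x y z hn hx hd using fun j => exists_unit_vector hs (hC j) (h j)
  refine ⟨![(!₂[1, 0, 0, 0] : EuclideanSpace ℝ (Fin 4)), !₂[s, √(1 - s ^ 2), 0, 0]],
    fun j => (!₂[x j, y j, z j, 0] : EuclideanSpace ℝ (Fin 4)), ?_, ?_, ?_⟩
  · intro i
    have hr : √(1 - s ^ 2) ^ 2 = 1 - s ^ 2 := Real.sq_sqrt (by linarith)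
    fin_cases i
    · simp [EuclideanSpace.norm_eq, Fin.sum_univ_four]
    · simp [EuclideanSpace.norm_eq, Fin.sum_univ_four, hr]
  · intro j
    simp [EuclideanSpace.norm_eq, Fin.sum_univ_four, hn]
  · intro i j
    fin_cases i
    · simp [PiLp.inner_apply, Fin.sum_univ_four, hx]
    · simp [PiLp.inner_apply, Fin.sum_univ_four, ← hd]; ring

lemma det_ne_zero_of_rank_eq {C : Matrix (Fin 2) (Fin 2) ℝ} (h : C.rank = 2) : C.det ≠ 0 := by
  have : LinearMap.range C.mulVecLin = ⊤ :=
    Submodule.eq_top_of_finrank_eq (by simpa [Matrix.rank] using h)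
  have hsurj : Function.Surjective C.mulVec := LinearMap.range_eq_top.mp this
  exact ((Matrix.isUnit_iff_isUnit_det _).mp
    (Matrix.mulVec_surjective_iff_isUnit.mp hsurj)).ne_zero

/-- An extreme point is not the midpoint of a nondegenerate segment. -/
lemma IsExtremePt.eq_zero_of_add_sub_mem {S : Set (Matrix (Fin 2) (Fin 2) ℝ)}
    {C D : Matrix (Fin 2) (Fin 2) ℝ} (h : IsExtremePt S C) (hp : C + D ∈ S) (hm : C - D ∈ S) :
    D = 0 := by
  have := (h.2 _ hp _ hm (1 / 2) (by norm_num) (by norm_num) (by module)).1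
  simpa using this

/-- A correlation matrix all of whose completions are forced into a plane, with enough non-parallel
vectors, is extreme. -/
lemma isExtremePt_of_planar {C : Matrix (Fin 2) (Fin 2) ℝ} (hC : C ∈ Cor 2 2)
    {α β : Fin 2 → ℝ} (hα : ∀ y, C 0 y = cos (α y)) (hβ : ∀ y, C 1 y = cos (β y))
    (hs : ∀ y, sin (α y + β y) ≠ 0) (hcos : ∀ y, cos (α y + β y) = cos (α 0 + β 0))
    (hne : ∃ y, sin (α y) ≠ 0 ∧ sin (β y) ≠ 0)
    (hforce : ∀ (a b : WithLp 2 (EuclideanSpace ℝ (Fin (2 + 2)) × EuclideanSpace ℝ (Fin (2 + 2))))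
      (v : Fin 2 → WithLp 2 (EuclideanSpace ℝ (Fin (2 + 2)) × EuclideanSpace ℝ (Fin (2 + 2)))),
      ‖a‖ = 1 → ‖b‖ = 1 → (∀ y, ‖v y‖ = 1) → (∀ y, ⟪a, v y⟫ = C 0 y) →
      (∀ y, ⟪b, v y⟫ = C 1 y) → ⟪a, b⟫ = cos (α 0 + β 0)) :
    IsExtremePt (Cor 2 2) C := by
  refine ⟨hC, ?_⟩
  have key : ∀ C₁ ∈ Cor 2 2, ∀ C₂ ∈ Cor 2 2, ∀ l : ℝ, 0 < l → l < 1 →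
      C = l • C₁ + (1 - l) • C₂ → C₁ = C := by
    rintro C₁ ⟨u, v, hu, hv, huv⟩ C₂ ⟨u', v', hu', hv', huv'⟩ l hl hl1 hCl
    have hl' : √l * √l = l := Real.mul_self_sqrt hl.le
    have hm' : √(1 - l) * √(1 - l) = 1 - l := Real.mul_self_sqrt (by linarith)
    let f (a b : EuclideanSpace ℝ (Fin (2 + 2))) :
        WithLp 2 (EuclideanSpace ℝ (Fin (2 + 2)) × EuclideanSpace ℝ (Fin (2 + 2))) :=
      WithLp.toLp 2 (√l • a, √(1 - l) • b)
    have hf : ∀ a b c d, ⟪f a b, f c d⟫ = l * ⟪a, c⟫ + (1 - l) * ⟪b, d⟫ := by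
      intro a b c d
      simp only [f, WithLp.prod_inner_apply, real_inner_smul_left, real_inner_smul_right]
      rw [← mul_assoc, ← mul_assoc, hl', hm']
    have hnorm : ∀ a b, ‖a‖ = 1 → ‖b‖ = 1 → ‖f a b‖ = 1 := by
      intro a b ha hb
      have : ‖f a b‖ ^ 2 = 1 := by
        rw [← real_inner_self_eq_norm_sq, hf, real_inner_self_eq_norm_sq,
          real_inner_self_eq_norm_sq, ha, hb]
        ring
      exact (pow_eq_one_iff_of_nonneg (norm_nonneg _) two_ne_zero).mp this
    have hfC : ∀ x y, ⟪f (u x) (u' x), f (v y) (v' y)⟫ = C x y := by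
      intro x y
      rw [hf, ← huv, ← huv', hCl]
      simp
    have hab := hforce (f (u 0) (u' 0)) (f (u 1) (u' 1)) (fun y => f (v y) (v' y))
      (hnorm _ _ (hu 0) (hu' 0)) (hnorm _ _ (hu 1) (hu' 1)) (fun y => hnorm _ _ (hv y) (hv' y))
      (hfC 0) (hfC 1)
    have hrel : ∀ y, sin (β y) • u 0 + sin (α y) • u 1 - sin (α y + β y) • v y = 0 := by
      intro y
      have h := sin_smul_add_sin_smul (hnorm _ _ (hu 0) (hu' 0)) (hnorm _ _ (hu 1) (hu' 1))
        (hnorm _ _ (hv y) (hv' y)) ((hfC 0 y).trans (hα y)) ((hfC 1 y).trans (hβ y))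
        (hab.trans (hcos y).symm)
      have h1 : √l • (sin (β y) • u 0 + sin (α y) • u 1 - sin (α y + β y) • v y) = 0 := by
        have h2 := congrArg (fun w => (WithLp.ofLp w).1) h
        simp only [f, WithLp.ofLp_sub, WithLp.ofLp_add, WithLp.ofLp_smul, WithLp.ofLp_zero,
          Prod.fst_sub, Prod.fst_add, Prod.smul_fst, Prod.fst_zero] at h2
        rw [← h2]
        module
      exact (smul_eq_zero.mp h1).resolve_left (Real.sqrt_pos.mpr hl).ne'
    have hs0 : ⟪u 0, u 1⟫ = cos (α 0 + β 0) := by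
      obtain ⟨y, h1, h2⟩ := hne
      rw [← hcos y]
      exact inner_eq_cos_add (hu 0) (hu 1) (hv y) (hrel y) h1 h2
    have hfin := fun y => inner_eq_cos (hu 0) (hu 1) (hrel y) (hs0.trans (hcos y).symm) (hs y)
    ext x y
    rw [huv]
    fin_cases x
    · exact (hfin y).1.trans (hα y).symm
    · exact (hfin y).2.trans (hβ y).symm
  intro C₁ h₁ C₂ h₂ l hl hl1 h
  refine ⟨key C₁ h₁ C₂ h₂ l hl hl1 h, key C₂ h₂ C₁ h₁ (1 - l) (by linarith) (by linarith) ?_⟩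
  rw [h]
  module

lemma cos_arccos_of_sq_le {c : ℝ} (h : c ^ 2 ≤ 1) : cos (arccos c) = c :=
  cos_arccos (by nlinarith) (by nlinarith)

lemma sin_arccos_nonneg (c : ℝ) : 0 ≤ sin (arccos c) :=
  sin_nonneg_of_nonneg_of_le_pi (arccos_nonneg c) (arccos_le_pi c)

lemma sq_le_one_of_mem_Cor {n m : ℕ} {C : Matrix (Fin n) (Fin m) ℝ} (hC : C ∈ Cor n m)
    (x : Fin n) (y : Fin m) : C x y ^ 2 ≤ 1 := by
  obtain ⟨u, v, hu, hv, h⟩ := hC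
  rw [h]
  exact inner_sq_le_one (hu x) (hv y)

/-- Trigonometric sufficient condition for being a correlation matrix. -/
lemma mem_Cor_of_cos_le {C : Matrix (Fin 2) (Fin 2) ℝ} (hC : ∀ x y, C x y ^ 2 ≤ 1)
    (h₁ : cos (arccos (C 0 0) + arccos (C 1 0)) ≤ cos (arccos (C 0 1) - arccos (C 1 1)))
    (h₂ : cos (arccos (C 0 1) + arccos (C 1 1)) ≤ cos (arccos (C 0 0) - arccos (C 1 0))) :
    C ∈ Cor 2 2 := by
  have hgram : ∀ s y, cos (arccos (C 0 y) + arccos (C 1 y)) ≤ s →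
      s ≤ cos (arccos (C 0 y) - arccos (C 1 y)) →
      (s - C 0 y * C 1 y) ^ 2 ≤ (1 - C 0 y ^ 2) * (1 - C 1 y ^ 2) := by
    intro s y hl hu
    have e0 := cos_arccos_of_sq_le (hC 0 y)
    have e1 := cos_arccos_of_sq_le (hC 1 y)
    rw [cos_add, e0, e1] at hl
    rw [cos_sub, e0, e1] at hu
    have s0 := sin_sq (arccos (C 0 y))
    have s1 := sin_sq (arccos (C 1 y))
    rw [e0] at s0
    rw [e1] at s1
    rw [← s0, ← s1, ← mul_pow]
    exact sq_le_sq' (by linarith) (by linarith)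
  have hself : ∀ y, cos (arccos (C 0 y) + arccos (C 1 y))
      ≤ cos (arccos (C 0 y) - arccos (C 1 y)) := by
    intro y
    rw [cos_add, cos_sub]
    nlinarith [mul_nonneg (sin_arccos_nonneg (C 0 y)) (sin_arccos_nonneg (C 1 y))]
  obtain h | h := le_total (cos (arccos (C 0 0) + arccos (C 1 0)))
    (cos (arccos (C 0 1) + arccos (C 1 1)))
  · refine mem_Cor_of_gram_le (s := cos (arccos (C 0 1) + arccos (C 1 1)))
      (cos_sq_le_one _) (hC 0) ?_
    rw [Fin.forall_fin_two]
    exact ⟨hgram _ _ h h₂, hgram _ _ le_rfl (hself 1)⟩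
  · refine mem_Cor_of_gram_le (s := cos (arccos (C 0 0) + arccos (C 1 0)))
      (cos_sq_le_one _) (hC 0) ?_
    rw [Fin.forall_fin_two]
    exact ⟨hgram _ _ le_rfl (hself 0), hgram _ _ h h₁⟩

/-- In an extreme point none of whose completion constraints is tight, every entry is `±1`. -/
lemma IsExtremePt.sq_eq_one_of_cos_lt {C : Matrix (Fin 2) (Fin 2) ℝ}
    (h : IsExtremePt (Cor 2 2) C)
    (h₁ : cos (arccos (C 0 0) + arccos (C 1 0)) < cos (arccos (C 0 1) - arccos (C 1 1)))
    (h₂ : cos (arccos (C 0 1) + arccos (C 1 1)) < cos (arccos (C 0 0) - arccos (C 1 0)))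
    (x y : Fin 2) : C x y ^ 2 = 1 := by
  by_contra hne
  have hsq := sq_le_one_of_mem_Cor h.1
  have hlt : C x y ^ 2 < 1 := lt_of_le_of_ne (hsq x y) hne
  let O : Set (Matrix (Fin 2) (Fin 2) ℝ) := {M |
    cos (arccos (M 0 0) + arccos (M 1 0)) < cos (arccos (M 0 1) - arccos (M 1 1)) ∧
    cos (arccos (M 0 1) + arccos (M 1 1)) < cos (arccos (M 0 0) - arccos (M 1 0)) ∧
    M x y ^ 2 < 1}
  have hO : IsOpen O := by
    have hc : ∀ i j, Continuous fun M : Matrix (Fin 2) (Fin 2) ℝ => arccos (M i j) :=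
      fun i j => continuous_arccos.comp (continuous_id.matrix_elem i j)
    exact (isOpen_lt (continuous_cos.comp ((hc 0 0).add (hc 1 0)))
        (continuous_cos.comp ((hc 0 1).sub (hc 1 1)))).inter
      ((isOpen_lt (continuous_cos.comp ((hc 0 1).add (hc 1 1)))
        (continuous_cos.comp ((hc 0 0).sub (hc 1 0)))).inter
      (isOpen_lt ((continuous_id.matrix_elem x y).pow 2) continuous_const))
  let g : ℝ → Matrix (Fin 2) (Fin 2) ℝ := fun t => C + t • Matrix.single x y 1
  have hg : Continuous g := by fun_prop
  have hmem : g ⁻¹' O ∈ nhds 0 := by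
    refine (hO.preimage hg).mem_nhds ?_
    simp only [g, O, Set.mem_preimage, zero_smul, add_zero]
    exact ⟨h₁, h₂, hlt⟩
  obtain ⟨ε, hε, hball⟩ := Metric.mem_nhds_iff.mp hmem
  have hin : ∀ t, |t| < ε → g t ∈ Cor 2 2 := by
    intro t ht
    have hgt : g t ∈ O := hball (by simpa [Metric.mem_ball] using ht)
    refine mem_Cor_of_cos_le ?_ hgt.1.le hgt.2.1.le
    intro i j
    by_cases hij : x = i ∧ y = j
    · obtain ⟨rfl, rfl⟩ := hij
      exact hgt.2.2.le
    · have : g t i j = C i j := by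
        simp [g, hij]
      rw [this]
      exact hsq i j
  have hD := h.eq_zero_of_add_sub_mem (D := (ε / 2) • Matrix.single x y 1)
    (hin (ε / 2) (by rw [abs_of_pos (by positivity)]; linarith))
    (by
      have := hin (-(ε / 2)) (by rw [abs_neg, abs_of_pos (by positivity)]; linarith)
      simp only [g, neg_smul, ← sub_eq_add_neg] at this
      exact this)
  have := congrFun (congrFun hD x) y
  simp at this
  exact hε.ne' this

lemma det_eq_zero_of_row_sq_eq_one {C : Matrix (Fin 2) (Fin 2) ℝ} (hC : C ∈ Cor 2 2)
    {x : Fin 2} (h : ∀ y, C x y ^ 2 = 1) : C.det = 0 := by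
  obtain ⟨u, v, hu, hv, huv⟩ := hC
  have hg : ∀ x, (⟪v 0, v 1⟫ - C x 0 * C x 1) ^ 2 ≤ (1 - C x 0 ^ 2) * (1 - C x 1 ^ 2) := by
    intro x
    have := gram_three_le (hv 0) (hv 1) (hu x)
    rwa [real_inner_comm (u x), real_inner_comm (u x), ← huv, ← huv] at this
  have ht : ⟪v 0, v 1⟫ = C x 0 * C x 1 := by
    have := hg x
    rw [h 0] at this
    nlinarith
  have ht1 : ⟪v 0, v 1⟫ ^ 2 = 1 := by rw [ht, mul_pow, h, h, one_mul]
  rw [Matrix.det_fin_two, eq_mul_of_gram_le ht1 (hg 0), eq_mul_of_gram_le ht1 (hg 1)]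
  ring

lemma Cor.gram_le {u v : Fin 2 → EuclideanSpace ℝ (Fin (2 + 2))} {C : Matrix (Fin 2) (Fin 2) ℝ}
    (hu : ∀ x, ‖u x‖ = 1) (hv : ∀ y, ‖v y‖ = 1) (huv : ∀ x y, C x y = ⟪u x, v y⟫) (y : Fin 2) :
    (⟪u 0, u 1⟫ - C 0 y * C 1 y) ^ 2 ≤ (1 - C 0 y ^ 2) * (1 - C 1 y ^ 2) := by
  have := gram_three_le (hu 0) (hu 1) (hv y)
  rwa [← huv, ← huv] at this

lemma det_eq_zero_of_column_sq_eq_one {C : Matrix (Fin 2) (Fin 2) ℝ} (hC : C ∈ Cor 2 2)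
    {y : Fin 2} (h : ∀ x, C x y ^ 2 = 1) : C.det = 0 := by
  obtain ⟨u, v, hu, hv, huv⟩ := hC
  have hg := Cor.gram_le hu hv huv
  have ht : ⟪u 0, u 1⟫ = C 0 y * C 1 y := by
    have := hg y
    rw [h 0] at this
    nlinarith
  have ht1 : ⟪u 0, u 1⟫ ^ 2 = 1 := by rw [ht, mul_pow, h, h, one_mul]
  rw [Matrix.det_fin_two, eq_mul_of_gram_le ht1 (hg 0), eq_mul_of_gram_le ht1 (hg 1)]
  ring

/-- Two entries `±1` in different rows and columns leave a free parameter. -/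
lemma IsExtremePt.det_eq_zero_of_diagonal {C : Matrix (Fin 2) (Fin 2) ℝ}
    (h : IsExtremePt (Cor 2 2) C) {y z : Fin 2} (hyz : y ≠ z)
    (hy : C 0 y ^ 2 = 1) (hz : C 1 z ^ 2 = 1) : C.det = 0 := by
  by_cases h1 : C 1 y ^ 2 = 1
  · exact det_eq_zero_of_column_sq_eq_one h.1 (y := y) (Fin.forall_fin_two.mpr ⟨hy, h1⟩)
  exfalso
  have hlt : C 1 y ^ 2 < 1 := lt_of_le_of_ne (sq_le_one_of_mem_Cor h.1 1 y) h1
  have hzy : C 0 z = C 0 y * C 1 z * C 1 y := by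
    obtain ⟨u, v, hu, hv, huv⟩ := h.1
    have hg := Cor.gram_le hu hv huv
    have h1 : ⟪u 0, u 1⟫ = C 0 y * C 1 y := by have := hg y; rw [hy] at this; nlinarith
    have h2 : ⟪u 0, u 1⟫ = C 0 z * C 1 z := by have := hg z; rw [hz] at this; nlinarith
    linear_combination C 1 z * (h1 - h2) - C 0 z * hz
  have hcases : ∀ j, j = y ∨ j = z := by lia
  let D : Matrix (Fin 2) (Fin 2) ℝ :=
    Matrix.single 0 z (C 0 y * C 1 z) + Matrix.single 1 y 1
  have D0y : D 0 y = 0 := by simp [D, hyz.symm]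
  have D0z : D 0 z = C 0 y * C 1 z := by simp [D]
  have D1y : D 1 y = 1 := by simp [D]
  have D1z : D 1 z = 0 := by simp [D, hyz]
  have hin : ∀ t, (C 1 y + t) ^ 2 ≤ 1 → C + t • D ∈ Cor 2 2 := by
    intro t ht
    have e0y : (C + t • D) 0 y = C 0 y := by simp [D0y]
    have e0z : (C + t • D) 0 z = C 0 y * C 1 z * (C 1 y + t) := by
      simp [D0z, hzy]; ring
    have e1y : (C + t • D) 1 y = C 1 y + t := by simp [D1y]
    have e1z : (C + t • D) 1 z = C 1 z := by simp [D1z]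
    refine mem_Cor_of_gram_le (s := C 0 y * (C 1 y + t)) ?_ ?_ ?_
    · rw [mul_pow, hy, one_mul]; exact ht
    · intro j
      obtain rfl | rfl := hcases j
      · rw [e0y, hy]
      · rw [e0z, mul_pow, mul_pow, hy, hz]; linarith
    · intro j
      obtain rfl | rfl := hcases j
      · rw [e0y, e1y, hy]; simp
      · rw [e0z, e1z, hz]
        have : C 0 y * C 1 j * (C 1 y + t) * C 1 j = C 0 y * (C 1 y + t) := by
          linear_combination (C 0 y * (C 1 y + t)) * hz
        rw [this]; simp
  have habs : |C 1 y| < 1 := by rwa [← sq_lt_one_iff_abs_lt_one]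
  have hpos : 0 < 1 - |C 1 y| := by linarith
  have hsmall : ∀ t, |t| ≤ 1 - |C 1 y| → (C 1 y + t) ^ 2 ≤ 1 := by
    intro t ht
    rw [sq_le_one_iff_abs_le_one]
    linarith [abs_add_le (C 1 y) t]
  have hD := h.eq_zero_of_add_sub_mem (D := (1 - |C 1 y|) • D)
    (hin _ (hsmall _ (abs_of_pos hpos).le))
    (by
      have := hin (-(1 - |C 1 y|)) (hsmall _ (by rw [abs_neg]; exact (abs_of_pos hpos).le))
      rwa [neg_smul, ← sub_eq_add_neg] at this)
  have := congrFun (congrFun hD 1) y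
  simp [D1y] at this
  linarith

lemma IsExtremePt.eq_of_sq_eq_one {C : Matrix (Fin 2) (Fin 2) ℝ}
    (h : IsExtremePt (Cor 2 2) C) (hdet : C.det ≠ 0) {p q : Fin 2 × Fin 2}
    (hp : C p.1 p.2 ^ 2 = 1) (hq : C q.1 q.2 ^ 2 = 1) : p = q := by
  obtain ⟨x, y⟩ := p
  obtain ⟨x', y'⟩ := q
  by_contra hne
  refine hdet ?_
  by_cases hx : x = x'
  · subst hx
    have hy : y ≠ y' := fun e => hne (by rw [e])
    refine det_eq_zero_of_row_sq_eq_one h.1 (x := x) fun j => ?_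
    obtain rfl | rfl : j = y ∨ j = y' := by lia
    exacts [hp, hq]
  by_cases hy : y = y'
  · subst hy
    refine det_eq_zero_of_column_sq_eq_one h.1 (y := y) fun j => ?_
    obtain rfl | rfl : j = x ∨ j = x' := by lia
    exacts [hp, hq]
  obtain ⟨rfl, rfl⟩ | ⟨rfl, rfl⟩ : x = 0 ∧ x' = 1 ∨ x = 1 ∧ x' = 0 := by lia
  · exact h.det_eq_zero_of_diagonal hy hp hq
  · exact h.det_eq_zero_of_diagonal (Ne.symm hy) hq hp

lemma IsExtremePt.cos_eq_cos {C : Matrix (Fin 2) (Fin 2) ℝ}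
    (h : IsExtremePt (Cor 2 2) C) (hdet : C.det ≠ 0) :
    cos (arccos (C 0 0) + arccos (C 1 0)) = cos (arccos (C 0 1) - arccos (C 1 1)) ∨
    cos (arccos (C 0 1) + arccos (C 1 1)) = cos (arccos (C 0 0) - arccos (C 1 0)) := by
  by_contra! hne
  have hsq := sq_le_one_of_mem_Cor h.1
  obtain ⟨u, v, hu, hv, huv⟩ := h.1
  have hb := fun y => cos_add_le_inner_le_cos_sub (hu 0) (hu 1) (hv y)
    (sin_arccos_nonneg (C 0 y)) (sin_arccos_nonneg (C 1 y))
    (by rw [← huv, cos_arccos_of_sq_le (hsq 0 y)]) (by rw [← huv, cos_arccos_of_sq_le (hsq 1 y)])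
  exact hdet <| det_eq_zero_of_row_sq_eq_one h.1 <| h.sq_eq_one_of_cos_lt
    (lt_of_le_of_ne ((hb 0).1.trans (hb 1).2) hne.1)
    (lt_of_le_of_ne ((hb 1).1.trans (hb 0).2) hne.2) 0

lemma isExtremePt_of_cos_eq_cos {C : Matrix (Fin 2) (Fin 2) ℝ} (hC : C ∈ Cor 2 2)
    (hdet : C.det ≠ 0)
    (h : cos (arccos (C 0 0) + arccos (C 1 0)) = cos (arccos (C 0 1) - arccos (C 1 1)) ∨
      cos (arccos (C 0 1) + arccos (C 1 1)) = cos (arccos (C 0 0) - arccos (C 1 0)))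
    (hbox : ∃ y, C 0 y ^ 2 ≠ 1 ∧ C 1 y ^ 2 ≠ 1) : IsExtremePt (Cor 2 2) C := by
  have hsq := sq_le_one_of_mem_Cor hC
  have hcos : ∀ x y, cos (arccos (C x y)) = C x y := fun x y => cos_arccos_of_sq_le (hsq x y)
  have hsin : ∀ x y, C x y ^ 2 ≠ 1 → sin (arccos (C x y)) ≠ 0 := by
    intro x y hne h0
    have := sin_sq_add_cos_sq (arccos (C x y))
    rw [h0, hcos] at this
    exact hne (by linarith)
  have hne_one : ∀ s : ℝ, (∀ y, (s - C 0 y * C 1 y) ^ 2 ≤ (1 - C 0 y ^ 2) * (1 - C 1 y ^ 2)) →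
      s ^ 2 ≠ 1 := by
    intro s hs hs1
    apply hdet
    rw [Matrix.det_fin_two, eq_mul_of_gram_le hs1 (hs 0), eq_mul_of_gram_le hs1 (hs 1)]
    ring
  obtain ⟨y₀, hy0, hy1⟩ := hbox
  -- `σ` tells on which side of each column vector the second row vector lies
  have main : ∀ σ : Fin 2 → ℝ, (∀ y, σ y = 1 ∨ σ y = -1) →
      (∀ y, cos (arccos (C 0 y) + σ y * arccos (C 1 y))
        = cos (arccos (C 0 0) + σ 0 * arccos (C 1 0))) →
      (∀ s, (∀ y, cos (arccos (C 0 y) + arccos (C 1 y)) ≤ s ∧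
        s ≤ cos (arccos (C 0 y) - arccos (C 1 y))) →
        s = cos (arccos (C 0 0) + σ 0 * arccos (C 1 0))) → IsExtremePt (Cor 2 2) C := by
    intro σ hσ hσcos hforce
    refine isExtremePt_of_planar (α := fun y => arccos (C 0 y))
      (β := fun y => σ y * arccos (C 1 y)) hC (fun y => (hcos 0 y).symm) ?_ ?_ hσcos
      ⟨y₀, hsin 0 y₀ hy0, ?_⟩ ?_
    · intro y
      obtain h | h := hσ y <;> simp [h, hcos]
    · intro y h0
      obtain ⟨u, v, hu, hv, huv⟩ := hC
      have hs : ⟪u 0, u 1⟫ = cos (arccos (C 0 0) + σ 0 * arccos (C 1 0)) :=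
        hforce _ fun y => cos_add_le_inner_le_cos_sub (hu 0) (hu 1) (hv y)
          (sin_arccos_nonneg (C 0 y)) (sin_arccos_nonneg (C 1 y))
          (by rw [← huv, hcos]) (by rw [← huv, hcos])
      apply hne_one _ (Cor.gram_le hu hv huv)
      rw [hs, ← hσcos y, cos_sq', h0]
      ring
    · obtain h | h := hσ y₀ <;> simpa [h] using hsin 1 y₀ hy1
    · intro a b v ha hb hv hav hbv
      exact hforce _ fun y => cos_add_le_inner_le_cos_sub ha hb (hv y)
        (sin_arccos_nonneg (C 0 y)) (sin_arccos_nonneg (C 1 y))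
        (by rw [hav, hcos]) (by rw [hbv, hcos])
  obtain h | h := h
  · refine main ![1, -1] (by simp [Fin.forall_fin_two]) ?_ ?_
    · simpa [Fin.forall_fin_two, ← sub_eq_add_neg] using h.symm
    · intro s hs
      have h0 := (hs 0).1
      have h1 := (hs 1).2
      simp only [Matrix.cons_val_zero, one_mul]
      linarith
  · refine main ![-1, 1] (by simp [Fin.forall_fin_two]) ?_ ?_
    · simpa [Fin.forall_fin_two, ← sub_eq_add_neg] using h
    · intro s hs
      have h0 := (hs 0).2
      have h1 := (hs 1).1
      simp only [Matrix.cons_val_zero, neg_one_mul, ← sub_eq_add_neg]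
      linarith

lemma cos_eq_cos_iff_of_mem {p q : ℝ} (hp0 : 0 ≤ p) (hp : p ≤ 2 * π) (hq0 : -π ≤ q)
    (hq : q ≤ π) :
    cos p = cos q ↔ p = q ∨ p = -q ∨ p = 2 * π + q ∨ p = 2 * π - q := by
  have hπ := pi_pos
  constructor
  · intro h
    obtain ⟨k, hk⟩ := cos_eq_cos_iff.mp h.symm
    have h1 : (-1 : ℝ) < k := by
      by_contra! hcon
      obtain hk | hk := hk <;> nlinarith
    have h2 : (k : ℝ) < 2 := by
      by_contra! hcon
      obtain hk | hk := hk <;> nlinarith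
    have h1' : (-1 : ℤ) < k := by exact_mod_cast h1
    have h2' : k < 2 := by exact_mod_cast h2
    obtain rfl | rfl : k = 0 ∨ k = 1 := by lia
    · simp at hk; tauto
    · simp at hk; tauto
  · rintro (rfl | rfl | rfl | rfl)
    · rfl
    · exact cos_neg q
    · rw [add_comm]; exact cos_add_two_pi q
    · exact cos_two_pi_sub q

/-- The two column constraints are tight together iff a cycle inequality is saturated. -/
lemma exists_cycle_iff {θ : Fin 2 → Fin 2 → ℝ} (h0 : ∀ x y, 0 ≤ θ x y) (hπ : ∀ x y, θ x y ≤ π) :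
    (∃ pb : (Fin 2 × Fin 2) × Bool,
          if pb.2 then
            (∑ q : Fin 2 × Fin 2, θ q.1 q.2) - 2 * θ pb.1.1 pb.1.2 = 0
          else
            (∑ q : Fin 2 × Fin 2, θ q.1 q.2) - 2 * θ pb.1.1 pb.1.2 = 2 * π) ↔
      (cos (θ 0 0 + θ 1 0) = cos (θ 0 1 - θ 1 1) ∨ cos (θ 0 1 + θ 1 1) = cos (θ 0 0 - θ 1 0)) := by
  have a0 := h0 0 0
  have b0 := h0 0 1
  have c0 := h0 1 0
  have d0 := h0 1 1
  have a1 := hπ 0 0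
  have b1 := hπ 0 1
  have c1 := hπ 1 0
  have d1 := hπ 1 1
  rw [cos_eq_cos_iff_of_mem (by linarith) (by linarith) (by linarith) (by linarith),
    cos_eq_cos_iff_of_mem (by linarith) (by linarith) (by linarith) (by linarith)]
  simp only [Prod.exists, Bool.exists_bool, Fin.exists_fin_two, Fintype.sum_prod_type,
    Fin.sum_univ_two, if_true, Bool.false_eq_true, if_false]
  grind

/-- If two different cycle inequalities are saturated, so are two box inequalities. -/
lemma cycle_unique {θ : Fin 2 → Fin 2 → ℝ} (h0 : ∀ x y, 0 ≤ θ x y) (hπ : ∀ x y, θ x y ≤ π)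
    (hbox : ∀ p q : Fin 2 × Fin 2, (θ p.1 p.2 = 0 ∨ θ p.1 p.2 = π) →
      (θ q.1 q.2 = 0 ∨ θ q.1 q.2 = π) → p = q) (p q : (Fin 2 × Fin 2) × Bool)
    (hp : if p.2 then (∑ q : Fin 2 × Fin 2, θ q.1 q.2) - 2 * θ p.1.1 p.1.2 = 0
      else (∑ q : Fin 2 × Fin 2, θ q.1 q.2) - 2 * θ p.1.1 p.1.2 = 2 * π)
    (hq : if q.2 then (∑ q : Fin 2 × Fin 2, θ q.1 q.2) - 2 * θ q.1.1 q.1.2 = 0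
      else (∑ q : Fin 2 × Fin 2, θ q.1 q.2) - 2 * θ q.1.1 q.1.2 = 2 * π) : p = q := by
  have hpi := pi_pos
  have a0 := h0 0 0
  have b0 := h0 0 1
  have c0 := h0 1 0
  have d0 := h0 1 1
  have a1 := hπ 0 0
  have b1 := hπ 0 1
  have c1 := hπ 1 0
  have d1 := hπ 1 1
  simp only [Fintype.sum_prod_type, Fin.sum_univ_two] at hp hq
  have hab := hbox (0, 0) (0, 1)
  have hac := hbox (0, 0) (1, 0)
  have had := hbox (0, 0) (1, 1)
  have hbc := hbox (0, 1) (1, 0)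
  have hbd := hbox (0, 1) (1, 1)
  have hcd := hbox (1, 0) (1, 1)
  simp only [Prod.mk.injEq, Fin.isValue, zero_ne_one, and_false, false_and, and_true,
    imp_false, not_or] at hab hac had hbc hbd hcd
  clear hbox h0 hπ
  obtain ⟨⟨x, y⟩, b⟩ := p
  obtain ⟨⟨x', y'⟩, b'⟩ := q
  fin_cases x <;> fin_cases y <;> fin_cases x' <;> fin_cases y' <;> cases b <;> cases b' <;>
    simp only [Fin.zero_eta, Fin.mk_one, if_true, Bool.false_eq_true, if_false] at hp hq <;>
    first
    | rfl
    | (exfalso; linarith)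
    | (exfalso; grind)

theorem stmt5 (C : Matrix (Fin 2) (Fin 2) ℝ) (hC : C ∈ Cor 2 2) (hrank : C.rank = 2)
    (θ : Fin 2 → Fin 2 → ℝ) (hθ : ∀ x y, θ x y = Real.arccos (C x y)) :
    IsExtremePt (Cor 2 2) C ↔
      ((∃! pb : (Fin 2 × Fin 2) × Bool,
          if pb.2 then
            (∑ q : Fin 2 × Fin 2, θ q.1 q.2) - 2 * θ pb.1.1 pb.1.2 = 0
          else
            (∑ q : Fin 2 × Fin 2, θ q.1 q.2) - 2 * θ pb.1.1 pb.1.2 = 2 * π) ∧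
       (∀ p q : (Fin 2 × Fin 2) × Bool,
          (if p.2 then θ p.1.1 p.1.2 = 0 else θ p.1.1 p.1.2 = π) →
          (if q.2 then θ q.1.1 q.1.2 = 0 else θ q.1.1 q.1.2 = π) →
          p = q)) := by
  have hdet := det_ne_zero_of_rank_eq hrank
  have hsq := sq_le_one_of_mem_Cor hC
  have h0 : ∀ x y, 0 ≤ θ x y := fun x y => hθ x y ▸ arccos_nonneg _
  have hπ : ∀ x y, θ x y ≤ π := fun x y => hθ x y ▸ arccos_le_pi _
  have hbox : ∀ p : Fin 2 × Fin 2, (θ p.1 p.2 = 0 ∨ θ p.1 p.2 = π) ↔ C p.1 p.2 ^ 2 = 1 := by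
    intro p
    have hcos : cos (θ p.1 p.2) = C p.1 p.2 := by rw [hθ, cos_arccos_of_sq_le (hsq p.1 p.2)]
    rw [← hcos]
    constructor
    · rintro (h | h) <;> simp [h]
    · intro h
      rw [hcos] at h
      obtain h | h := sq_eq_sq_iff_eq_or_eq_neg.mp (h.trans (one_pow 2).symm)
      · simp [hθ, h]
      · simp [hθ, h]
  have htight := exists_cycle_iff h0 hπ
  rw [hθ 0 0, hθ 0 1, hθ 1 0, hθ 1 1] at htight
  constructor
  · intro h
    have hone : ∀ p q : Fin 2 × Fin 2, (θ p.1 p.2 = 0 ∨ θ p.1 p.2 = π) →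
        (θ q.1 q.2 = 0 ∨ θ q.1 q.2 = π) → p = q := fun p q hp hq =>
      h.eq_of_sq_eq_one hdet ((hbox p).mp hp) ((hbox q).mp hq)
    refine ⟨?_, ?_⟩
    · obtain ⟨p, hp⟩ := htight.mpr (h.cos_eq_cos hdet)
      exact ⟨p, hp, fun q hq => cycle_unique h0 hπ hone q p hq hp⟩
    · rintro ⟨p, b⟩ ⟨q, b'⟩ hp hq
      have hpq : p = q := by
        apply hone
        · cases b
          exacts [Or.inr hp, Or.inl hp]
        · cases b'
          exacts [Or.inr hq, Or.inl hq]
      subst hpq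
      have hpi := pi_pos
      cases b <;> cases b' <;> simp at hp hq ⊢ <;> linarith
  · rintro ⟨hex, hone⟩
    have hone' : ∀ p q : Fin 2 × Fin 2, C p.1 p.2 ^ 2 = 1 → C q.1 q.2 ^ 2 = 1 → p = q := by
      intro p q hp hq
      obtain hp | hp := (hbox p).mpr hp <;> obtain hq | hq := (hbox q).mpr hq
      · exact congrArg Prod.fst (hone (p, true) (q, true) hp hq)
      · exact congrArg Prod.fst (hone (p, true) (q, false) hp hq)
      · exact congrArg Prod.fst (hone (p, false) (q, true) hp hq)
      · exact congrArg Prod.fst (hone (p, false) (q, false) hp hq)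
    refine isExtremePt_of_cos_eq_cos hC hdet (htight.mp hex.exists) ?_
    by_contra! hcon
    have hcol : ∀ y, ∃ x, C x y ^ 2 = 1 := fun y => by
      by_cases h : C 0 y ^ 2 = 1
      exacts [⟨0, h⟩, ⟨1, hcon y h⟩]
    obtain ⟨x, hx⟩ := hcol 0
    obtain ⟨x', hx'⟩ := hcol 1
    simpa using congrArg Prod.snd (hone' (x, 0) (x', 1) hx hx')
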